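/- arXiv:1401.6799 — 2 statements merged into one kernel-verified Lean document; each statement's English description precedes it below -/
import Mathlib

section
/- Fix n ≥ 2, k ≥ 1, p ∈ [0,1], 0 < r ≤ 1/8, and a point q such that B(q,2r) is contained in the unit square A = [-1/2,1/2]² ⊆ ℝ². Let b_1,…,b_k be independent uniform random points on the disc B(q,r), and, independently, let u_1,…,u_{n−1} be independent uniform random points on A, each independently 'active' with probability p. Then the probability that no active user point lies in the union ⋃_{l=1}^{k} B(b_l,r) equals I_k := ∫_{[1,4]} (1 − p·πr²·a)^{n−1} dμ_k(a), where μ_k is the law of α_k = area(⋃_{l=1}^{k} B(x_l,1))/π for x_1,…,x_k i.i.d. uniform on B(0,1). -/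
/-!
Condition on the disc centres. Given `b_1,…,b_k`, the users are independent, and each of them is
active and inside `U = ⋃_l B(b_l,r)` with probability `p · area(U)`, because `U ⊆ B(q,2r) ⊆ A`;
the conditional probability is therefore `(1 - p · area(U)) ^ (n-1)`. Writing `b_l = q + r x_l` with
`x_l` i.i.d. uniform on the unit disc (`map_scaleMap_uniformBall`), `area(U) = r² · π · α_k(x)`
(`measure_user`), so averaging over the centres gives an integral against the law of `α_k`. Almost
surely `α_k ∈ [1,4]` (`normArea_mem`), so restricting that integral to `[1,4]` changes nothing.
-/

noncomputable section
open MeasureTheory Real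

/-- The plane `ℝ²` with the Euclidean metric. -/
abbrev Plane := EuclideanSpace ℝ (Fin 2)

/-- The unit square `A = [-1/2,1/2]² ⊆ ℝ²`. -/
def unitSquare : Set Plane := {x | ∀ i, x i ∈ Set.Icc (-(1:ℝ)/2) (1/2)}

/-- The uniform probability measure on the unit square (which has Lebesgue area `1`). -/
def uniformA : Measure Plane := volume.restrict unitSquare

/-- The Bernoulli law on `Bool` with success probability `p` (a user is active w.p. `p`). -/
def bern (p : ℝ) : Measure Bool :=
  ENNReal.ofReal p • Measure.dirac true + ENNReal.ofReal (1 - p) • Measure.dirac false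

instance (p : ℝ) : IsFiniteMeasure (bern p) := by
  constructor
  simp [bern]

/-- The uniform probability measure on the closed Euclidean disc `B(c,s) ⊆ ℝ²`. -/
def uniformBall (c : Plane) (s : ℝ) : Measure Plane :=
  (volume (Metric.closedBall c s))⁻¹ • volume.restrict (Metric.closedBall c s)

instance (c : Plane) (s : ℝ) : IsFiniteMeasure (uniformBall c s) := by
  constructor
  rw [uniformBall]
  simp only [Measure.smul_apply, Measure.restrict_apply MeasurableSet.univ, Set.univ_inter,
    smul_eq_mul]
  rcases eq_or_ne (volume (Metric.closedBall c s)) 0 with h | h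
  · simp [h]
  · rw [ENNReal.inv_mul_cancel h measure_closedBall_lt_top.ne]
    exact ENNReal.one_lt_top

/-- `μ_k`: the law on `[1,4]` of the normalized union area `α_k = area(⋃_l B(x_l,1))/π`,
where `x_1,…,x_k` are i.i.d. uniform on the unit disc `B(0,1)`. -/
def normAreaLaw (k : ℕ) : Measure ℝ :=
  Measure.map (fun x : Fin k → Plane => (volume (⋃ l, Metric.closedBall (x l) 1)).toReal / π)
    (Measure.pi fun _ : Fin k => uniformBall 0 1)

/-- The homothety `x ↦ q + r x`, which maps the unit disc onto `B(q,r)`. -/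
def scaleMap (q : Plane) (r : ℝ) (x : Plane) : Plane := q + r • x

lemma measurable_scaleMap (q : Plane) (r : ℝ) : Measurable (scaleMap q r) := by
  unfold scaleMap; fun_prop

lemma volume_preimage_scaleMap (q : Plane) {r : ℝ} (hr : 0 < r) (s : Set Plane) :
    volume (scaleMap q r ⁻¹' s) = ENNReal.ofReal ((r ^ 2)⁻¹) * volume s := by
  have h1 : scaleMap q r ⁻¹' s = (r • ·) ⁻¹' ((q + ·) ⁻¹' s) := rfl
  rw [h1, Measure.addHaar_preimage_smul _ hr.ne', measure_preimage_add]
  simp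

lemma dist_scaleMap (q : Plane) {r : ℝ} (hr : 0 < r) (x y : Plane) :
    dist (scaleMap q r x) (scaleMap q r y) = r * dist x y := by
  simp [scaleMap, dist_add_left, dist_smul₀, abs_of_pos hr]

lemma preimage_closedBall_scaleMap (q : Plane) {r : ℝ} (hr : 0 < r) (x : Plane) :
    scaleMap q r ⁻¹' Metric.closedBall (scaleMap q r x) r = Metric.closedBall x 1 := by
  ext y
  simp only [Set.mem_preimage, Metric.mem_closedBall, dist_scaleMap q hr]
  exact mul_le_iff_le_one_right hr

lemma map_scaleMap_uniformBall (q : Plane) {r : ℝ} (hr : 0 < r) :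
    (uniformBall 0 1).map (scaleMap q r) = uniformBall q r := by
  have hb : scaleMap q r ⁻¹' Metric.closedBall q r = Metric.closedBall 0 1 := by
    simpa [scaleMap] using preimage_closedBall_scaleMap q hr 0
  have hc0 : ENNReal.ofReal ((r ^ 2)⁻¹) ≠ 0 := by
    rw [ne_eq, ENNReal.ofReal_eq_zero, not_le]; positivity
  ext s hs
  rw [Measure.map_apply (measurable_scaleMap q r) hs]
  simp only [uniformBall, Measure.smul_apply, smul_eq_mul]
  rw [Measure.restrict_apply (measurable_scaleMap q r hs), Measure.restrict_apply hs, ← hb,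
    ← Set.preimage_inter, volume_preimage_scaleMap q hr, volume_preimage_scaleMap q hr,
    ENNReal.mul_inv (Or.inl hc0) (Or.inl ENNReal.ofReal_ne_top), mul_mul_mul_comm,
    ENNReal.inv_mul_cancel hc0 ENNReal.ofReal_ne_top, one_mul]

lemma volume_unitSquare : volume unitSquare = 1 := by
  have h : unitSquare = (MeasurableEquiv.toLp 2 (Fin 2 → ℝ)).symm ⁻¹'
      (Set.univ.pi fun _ => Set.Icc (-(1:ℝ)/2) (1/2)) := by
    ext x; simp only [unitSquare, Set.mem_ofPred_eq, Set.mem_preimage, Set.mem_univ_pi]; rfl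
  rw [h, (EuclideanSpace.volume_preserving_symm_measurableEquiv_toLp (Fin 2)).measure_preimage
    (MeasurableSet.univ_pi fun _ => measurableSet_Icc).nullMeasurableSet, volume_pi_pi]
  simp [Real.volume_Icc]; norm_num

instance : IsProbabilityMeasure uniformA := ⟨by simp [uniformA, volume_unitSquare]⟩

lemma isProbabilityMeasure_bern {p : ℝ} (hp : p ∈ Set.Icc (0:ℝ) 1) :
    IsProbabilityMeasure (bern p) := ⟨by
  simp only [bern, Measure.add_apply, Measure.smul_apply, measure_univ, smul_eq_mul, mul_one]
  rw [← ENNReal.ofReal_add hp.1 (by linarith [hp.2])]; simp⟩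

/-- The normalized union area `α_k`, as a function of the centres. -/
def normArea {k : ℕ} (x : Fin k → Plane) : ℝ :=
  (volume (⋃ l, Metric.closedBall (x l) 1)).toReal / π

lemma measurable_normArea (k : ℕ) : Measurable (normArea (k := k)) := by
  have hs : MeasurableSet {z : (Fin k → Plane) × Plane | ∃ l, dist z.2 (z.1 l) ≤ 1} := by
    simp only [Set.ofPred_exists]
    exact MeasurableSet.iUnion fun l => measurableSet_le (by fun_prop) measurable_const
  have h := measurable_measure_prodMk_left (ν := (volume : Measure Plane)) hs
  have h2 : ∀ x : Fin k → Plane,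
      (Prod.mk x ⁻¹' {z : (Fin k → Plane) × Plane | ∃ l, dist z.2 (z.1 l) ≤ 1})
        = ⋃ l, Metric.closedBall (x l) 1 := by
    intro x; ext y; simp
  simp only [h2] at h
  exact h.ennreal_toReal.div_const π

lemma volume_iUnion_closedBall_lt_top {k : ℕ} (x : Fin k → Plane) (s : ℝ) :
    volume (⋃ l, Metric.closedBall (x l) s) < ⊤ :=
  (isCompact_iUnion fun l => isCompact_closedBall (x l) s).measure_lt_top

lemma normArea_mem {k : ℕ} (hk : 1 ≤ k) {x : Fin k → Plane}
    (hx : ∀ l, x l ∈ Metric.closedBall (0 : Plane) 1) : normArea x ∈ Set.Icc (1:ℝ) 4 := by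
  have hv : ∀ (c : Plane) (s : ℝ), 0 ≤ s →
      (volume (Metric.closedBall c s)).toReal = s ^ 2 * π := by
    intro c s hs
    rw [EuclideanSpace.volume_closedBall_fin_two]
    simp [hs, Real.pi_pos.le]
  constructor
  · rw [normArea, le_div_iff₀ Real.pi_pos]
    have := hv (x ⟨0, hk⟩) 1 zero_le_one
    rw [one_pow] at this
    rw [← this]
    exact ENNReal.toReal_mono (volume_iUnion_closedBall_lt_top x 1).ne
      (measure_mono (Set.subset_iUnion (fun l => Metric.closedBall (x l) 1) _))
  · rw [normArea, div_le_iff₀ Real.pi_pos]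
    have := hv 0 2 zero_le_two
    rw [show (4:ℝ) = 2 ^ 2 by norm_num, ← this]
    refine ENNReal.toReal_mono measure_closedBall_lt_top.ne (measure_mono ?_)
    refine Set.iUnion_subset fun l => Metric.closedBall_subset_closedBall' ?_
    have := Metric.mem_closedBall.1 (hx l)
    linarith

lemma ae_mem_closedBall (k : ℕ) : ∀ᵐ x ∂(Measure.pi fun _ : Fin k => uniformBall 0 1),
    ∀ l, x l ∈ Metric.closedBall (0 : Plane) 1 := by
  rw [ae_all_iff]
  intro l
  refine (Measure.tendsto_eval_ae_ae (μ := fun _ : Fin k => uniformBall 0 1)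
    (i := l)).eventually ?_
  exact Measure.ae_smul_measure (ae_restrict_mem Metric.isClosed_closedBall.measurableSet) _

/-- The probability that one user is not both active and in `⋃_l B(q + r x_l, r)`, for fixed
`x_l` in the unit disc. The union lies in `B(q,2r)`, hence in the square, so there is no boundary
effect and its area is `r²` times that of `⋃_l B(x_l,1)`. -/
lemma measure_user {k : ℕ} {p : ℝ} (hp : p ∈ Set.Icc (0:ℝ) 1) {r : ℝ} (hr : 0 < r)
    {q : Plane} (hq : Metric.closedBall q (2*r) ⊆ unitSquare) {x : Fin k → Plane}
    (hx : ∀ l, x l ∈ Metric.closedBall (0 : Plane) 1) :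
    (uniformA.prod (bern p))
      {z : Plane × Bool | ¬(z.2 = true ∧ ∃ l, dist z.1 (scaleMap q r (x l)) ≤ r)}
      = ENNReal.ofReal (1 - p * (π * r ^ 2) * normArea x) := by
  have := isProbabilityMeasure_bern hp
  set U : Set Plane := ⋃ l, Metric.closedBall (scaleMap q r (x l)) r with hU
  have hUm : MeasurableSet U :=
    MeasurableSet.iUnion fun l => Metric.isClosed_closedBall.measurableSet
  have hset : {z : Plane × Bool | ¬(z.2 = true ∧ ∃ l, dist z.1 (scaleMap q r (x l)) ≤ r)}
      = (U ×ˢ {true})ᶜ := by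
    ext z; simp [hU, and_comm]
  have hUA : U ⊆ unitSquare := by
    refine (Set.iUnion_subset fun l => Metric.closedBall_subset_closedBall' ?_).trans hq
    have h1 := Metric.mem_closedBall.1 (hx l)
    have h2 := dist_scaleMap q hr (x l) 0
    have h3 : scaleMap q r 0 = q := by simp [scaleMap]
    rw [h3] at h2
    nlinarith
  have hvol : volume U = ENNReal.ofReal (π * r ^ 2 * normArea x) := by
    have h1 : scaleMap q r ⁻¹' U = ⋃ l, Metric.closedBall (x l) 1 := by
      simp only [hU, Set.preimage_iUnion, preimage_closedBall_scaleMap q hr]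
    have h2 := volume_preimage_scaleMap q hr U
    rw [h1] at h2
    rw [← ENNReal.ofReal_toReal (show volume U ≠ ⊤ from (volume_iUnion_closedBall_lt_top _ r).ne)]
    congr 1
    rw [normArea, h2, ENNReal.toReal_mul, ENNReal.toReal_ofReal (by positivity)]
    have := Real.pi_pos
    field_simp
  have hbern : bern p {true} = ENNReal.ofReal p := by simp [bern]
  rw [hset, prob_compl_eq_one_sub (hUm.prod (measurableSet_singleton _)), Measure.prod_prod,
    hbern, uniformA, Measure.restrict_apply hUm, Set.inter_eq_left.2 hUA, hvol,
    mul_comm, ← ENNReal.ofReal_mul hp.1, ← ENNReal.ofReal_one, ← ENNReal.ofReal_sub]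
  · ring_nf
  · have : 0 ≤ normArea x := by unfold normArea; positivity
    have := hp.1
    positivity

/-- with `b_1,…,b_k` i.i.d. uniform on the disc `B(q,r)` (where `B(q,2r) ⊆ A`)
and, independently, `u_1,…,u_{n-1}` i.i.d. uniform on `A`, each independently active with
probability `p`, the probability that no active user lies in `⋃_l B(b_l,r)` equals
`I_k = ∫_{[1,4]} (1 - p·πr²·a)^(n-1) dμ_k(a)`. -/
theorem no_active_user_in_union_eq_Ik (n k : ℕ) (hn : 2 ≤ n) (hk : 1 ≤ k)
    (p : ℝ) (hp : p ∈ Set.Icc (0:ℝ) 1) (r : ℝ) (hr : 0 < r) (hr8 : r ≤ 1/8)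
    (q : Plane) (hq : Metric.closedBall q (2*r) ⊆ unitSquare) :
    ((Measure.pi fun _ : Fin k => uniformBall q r).prod
        (Measure.pi fun _ : Fin (n-1) => uniformA.prod (bern p)))
      {ω : (Fin k → Plane) × (Fin (n-1) → Plane × Bool) |
        ∀ j, ¬((ω.2 j).2 = true ∧ ∃ l, dist (ω.2 j).1 (ω.1 l) ≤ r)}
      = ENNReal.ofReal
          (∫ a in Set.Icc (1:ℝ) 4, (1 - p * (π * r ^ 2) * a) ^ (n - 1) ∂(normAreaLaw k)) := by
  set P : Measure (Fin k → Plane) := Measure.pi fun _ : Fin k => uniformBall 0 1 with hP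
  have := isProbabilityMeasure_bern hp
  have hS : MeasurableSet {ω : (Fin k → Plane) × (Fin (n-1) → Plane × Bool) |
        ∀ j, ¬((ω.2 j).2 = true ∧ ∃ l, dist (ω.2 j).1 (ω.1 l) ≤ r)} := by
    simp only [Set.ofPred_forall]
    refine MeasurableSet.iInter fun j => MeasurableSet.compl (MeasurableSet.inter ?_ ?_)
    · exact (measurableSet_singleton true).preimage (by fun_prop)
    · have h : {ω : (Fin k → Plane) × (Fin (n-1) → Plane × Bool) |
          ∃ l, dist (ω.2 j).1 (ω.1 l) ≤ r} = ⋃ l, {ω | dist (ω.2 j).1 (ω.1 l) ≤ r} := by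
        ext ω; simp
      have hm : MeasurableSet {ω : (Fin k → Plane) × (Fin (n-1) → Plane × Bool) |
          ∃ l, dist (ω.2 j).1 (ω.1 l) ≤ r} := by
        rw [h]
        exact MeasurableSet.iUnion fun l => measurableSet_le (by fun_prop) measurable_const
      exact hm
  have hmap : (Measure.pi fun _ : Fin k => uniformBall q r)
      = P.map (fun x l => scaleMap q r (x l)) := by
    have : IsFiniteMeasure ((uniformBall 0 1).map (scaleMap q r)) := by infer_instance
    rw [hP, Measure.pi_map_pi (μ := fun _ : Fin k => uniformBall 0 1)
      (f := fun _ => scaleMap q r) fun _ => (measurable_scaleMap q r).aemeasurable]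
    simp only [map_scaleMap_uniformBall q hr]
  have hfm : Measurable (fun (x : Fin k → Plane) l => scaleMap q r (x l)) :=
    measurable_pi_lambda _ fun l => (measurable_scaleMap q r).comp (measurable_pi_apply l)
  have hmem : ∀ᵐ x ∂P, normArea x ∈ Set.Icc (1:ℝ) 4 :=
    (ae_mem_closedBall k).mono fun x hx => normArea_mem hk hx
  have hα := measurable_normArea k
  have hlaw : normAreaLaw k = P.map normArea := rfl
  have hres : (normAreaLaw k).restrict (Set.Icc 1 4) = normAreaLaw k := by
    refine Measure.restrict_eq_self_of_ae_mem ?_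
    rw [hlaw]
    exact (ae_map_iff hα.aemeasurable measurableSet_Icc).2 hmem
  -- Since `p ≤ 1`, `r ≤ 1/8` and `α_k ≤ 4`, the base is at least `1 - 4π/64 > 0`.
  have hbase : ∀ᵐ x ∂P, 0 ≤ 1 - p * (π * r ^ 2) * normArea x ∧
      1 - p * (π * r ^ 2) * normArea x ≤ 1 := by
    filter_upwards [hmem] with x hx
    have hp0 := hp.1
    have hπ := Real.pi_pos
    have ha : 0 ≤ normArea x := by linarith [hx.1]
    have h0 : 0 ≤ p * (π * r ^ 2) * normArea x := by positivity
    have h1 : p * (π * r ^ 2) * normArea x ≤ 1 * (4 * (1/8) ^ 2) * 4 := by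
      have := Real.pi_le_four
      gcongr
      · exact hp.2
      · exact hx.2
    constructor <;> linarith
  have hgm : Measurable fun a : ℝ => (1 - p * (π * r ^ 2) * a) ^ (n - 1) := by fun_prop
  rw [hres, hlaw, integral_map hα.aemeasurable hgm.aestronglyMeasurable,
    ofReal_integral_eq_lintegral_ofReal, Measure.prod_apply hS, hmap,
    lintegral_map (measurable_measure_prodMk_left hS) hfm]
  · refine lintegral_congr_ae ?_
    filter_upwards [ae_mem_closedBall k, hbase] with x hx hb
    have hsec : Prod.mk (fun l => scaleMap q r (x l)) ⁻¹'
        {ω : (Fin k → Plane) × (Fin (n-1) → Plane × Bool) |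
          ∀ j, ¬((ω.2 j).2 = true ∧ ∃ l, dist (ω.2 j).1 (ω.1 l) ≤ r)}
        = Set.univ.pi fun _ => {z : Plane × Bool |
          ¬(z.2 = true ∧ ∃ l, dist z.1 (scaleMap q r (x l)) ≤ r)} := by
      ext u; simp [Set.mem_pi]
    rw [hsec, Measure.pi_pi, measure_user hp hr hq hx, ENNReal.ofReal_pow hb.1]
    simp
  · refine Integrable.of_bound (hgm.comp hα).aestronglyMeasurable 1 ?_
    filter_upwards [hbase] with x hb
    rw [Real.norm_of_nonneg (pow_nonneg hb.1 _)]
    exact pow_le_one₀ hb.1 hb.2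
  · filter_upwards [hbase] with x hb
    exact pow_nonneg hb.1 _
end
end

section
/- (Finite-n version of Lemma 1.) Fix n ≥ 2, m ≥ 1, p ∈ [0,1], 0 < r ≤ 1/8, and a point q such that B(q,2r) ⊆ A = [-1/2,1/2]² ⊆ ℝ². Let b_1,…,b_m be independent uniform random points on A and, independently, u_1,…,u_{n−1} independent uniform random points on A, each independently 'active' with probability p. Then the probability that there exists l ∈ {1,…,m} with dist(q,b_l) ≤ r and no active user point within distance r of b_l is at least (1 − (1 − πr²)^m)·(1 − 4πr²)^{n−1}. -/
/-!
If some station lies in `B(q, r)` and no user at all lies in `B(q, 2r)`, then by the triangle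
inequality that station is at distance more than `r` from every user, so the event in question
occurs. This sub-event is a product of an event about the stations and an event about the users.
Both discs lie in the unit square, so they have probabilities `π r²` and `4 π r²`; hence the two
factors have probabilities `1 - (1 - π r²)^m` and `(1 - 4 π r²)^(n-1)`.
-/

noncomputable section
open MeasureTheory Real

lemma uniformA_univ : uniformA Set.univ = 1 := by
  have h : unitSquare = (WithLp.ofLp : Plane → (Fin 2 → ℝ)) ⁻¹'
      (Set.univ.pi fun _ => Set.Icc (-(1:ℝ)/2) (1/2)) := by
    ext x; simp only [unitSquare, Set.mem_ofPred_eq, Set.mem_preimage, Set.mem_univ_pi]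
  rw [uniformA, Measure.restrict_apply_univ, h,
    (PiLp.volume_preserving_ofLp (Fin 2)).measure_preimage
      (MeasurableSet.univ_pi fun _ => measurableSet_Icc).nullMeasurableSet,
    volume_pi_pi]
  norm_num [Real.volume_Icc]

instance inst_s13 : IsProbabilityMeasure uniformA := ⟨uniformA_univ⟩

/-- The uniform measure of the complement of a disc contained in the unit square. -/
lemma uniformA_compl_closedBall (q : Plane) {s : ℝ} (hs : 0 ≤ s)
    (h : Metric.closedBall q s ⊆ unitSquare) :
    uniformA (Metric.closedBall q s)ᶜ = ENNReal.ofReal (1 - π * s ^ 2) := by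
  have hb : uniformA (Metric.closedBall q s) = ENNReal.ofReal (π * s ^ 2) := by
    rw [uniformA, Measure.restrict_apply Metric.isClosed_closedBall.measurableSet,
      Set.inter_eq_self_of_subset_left h, EuclideanSpace.volume_closedBall_fin_two,
      ← ENNReal.ofReal_pow hs, ← ENNReal.ofReal_mul (by positivity),
      mul_comm]
  rw [prob_compl_eq_one_sub Metric.isClosed_closedBall.measurableSet, hb,
    ENNReal.ofReal_sub _ (by positivity), ENNReal.ofReal_one]

/-- finite-`n` version of Lemma 1: with `m` i.i.d. uniform base stations on
`A` and, independently, `n-1` i.i.d. uniform users on `A`, each independently active with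
probability `p`, and a nominally placed point `q` (`B(q,2r) ⊆ A`), the probability that
some base station within distance `r` of `q` hears no active user is at least
`(1-(1-πr²)^m)·(1-4πr²)^(n-1)`. -/
theorem noncooperative_collection_lower_bound (n m : ℕ) (hn : 2 ≤ n) (hm : 1 ≤ m)
    (p : ℝ) (hp : p ∈ Set.Icc (0:ℝ) 1) (r : ℝ) (hr : 0 < r) (hr8 : r ≤ 1/8)
    (q : Plane) (hq : Metric.closedBall q (2*r) ⊆ unitSquare) :
    ENNReal.ofReal ((1 - (1 - π * r ^ 2) ^ m) * (1 - 4 * (π * r ^ 2)) ^ (n - 1))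
      ≤ ((Measure.pi fun _ : Fin m => uniformA).prod
          (Measure.pi fun _ : Fin (n-1) => uniformA.prod (bern p)))
        {ω : (Fin m → Plane) × (Fin (n-1) → Plane × Bool) |
          ∃ l, dist q (ω.1 l) ≤ r ∧
            ∀ j, ¬((ω.2 j).2 = true ∧ dist (ω.2 j).1 (ω.1 l) ≤ r)} := by
  have := isProbabilityMeasure_bern hp
  have hπ : 4 * (π * r ^ 2) ≤ 1 := by
    nlinarith [Real.pi_lt_four, Real.pi_pos, mul_self_nonneg r,
      mul_le_mul hr8 hr8 hr.le (by norm_num)]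
  have hπ0 : 0 ≤ π * r ^ 2 := by positivity
  set S : Set (Fin m → Plane) := (Set.univ.pi fun _ => (Metric.closedBall q r)ᶜ)ᶜ with hS
  set T : Set (Fin (n-1) → Plane × Bool) :=
    Set.univ.pi fun _ => (Metric.closedBall q (2*r))ᶜ ×ˢ Set.univ with hT
  have hSμ : (Measure.pi fun _ : Fin m => uniformA) S
      = ENNReal.ofReal (1 - (1 - π * r ^ 2) ^ m) := by
    rw [hS, prob_compl_eq_one_sub (MeasurableSet.univ_pi fun _ =>
      Metric.isClosed_closedBall.measurableSet.compl), Measure.pi_pi,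
      Finset.prod_const, Finset.card_univ, Fintype.card_fin,
      uniformA_compl_closedBall q hr.le
        ((Metric.closedBall_subset_closedBall (by linarith)).trans hq),
      ← ENNReal.ofReal_pow (by linarith), ENNReal.ofReal_sub _ (pow_nonneg (by linarith) _),
      ENNReal.ofReal_one]
  have hTμ : (Measure.pi fun _ : Fin (n-1) => uniformA.prod (bern p)) T
      = ENNReal.ofReal ((1 - 4 * (π * r ^ 2)) ^ (n - 1)) := by
    rw [hT, Measure.pi_pi, Finset.prod_const, Finset.card_univ, Fintype.card_fin,
      Measure.prod_prod, measure_univ, mul_one,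
      uniformA_compl_closedBall q (by linarith) hq,
      ENNReal.ofReal_pow (by linarith)]
    congr 3
    ring
  have h1 : 0 ≤ 1 - (1 - π * r ^ 2) ^ m :=
    sub_nonneg.2 (pow_le_one₀ (by linarith) (by linarith))
  rw [ENNReal.ofReal_mul h1, ← hSμ, ← hTμ, ← Measure.prod_prod]
  refine measure_mono ?_
  rintro ⟨b, u⟩ ⟨hb, hu⟩
  simp only [hS, hT, Set.mem_compl_iff, Set.mem_univ_pi, Metric.mem_closedBall, not_forall,
    Set.mem_prod, Set.mem_univ, and_true, not_le] at hb hu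
  obtain ⟨l, hl⟩ := hb
  refine ⟨l, by rw [dist_comm]; exact not_lt.1 hl, fun j hj => ?_⟩
  have h2 := dist_triangle (u j).1 (b l) q
  have h3 := hu j
  have h4 := hj.2
  dsimp only at h4
  linarith
end
end
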